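/- arXiv:1204.3097 — 4 statements merged into one kernel-verified Lean document; each statement's English description precedes it below -/
import Mathlib

section
/- Let λ_1, …, λ_n be distinct nonzero real numbers, let A = diag(λ_1, …, λ_n) ∈ ℝ^{n×n}, and let C = (c_1, …, c_n) ∈ ℝ^{1×n} be a row vector with c_j ≠ 0 for every j. Fix K with 2K+1 ≤ n. If x, x' ∈ ℝ^n are both K-sparse and C A^t x = C A^t x' for every t = 0, 1, …, 2K, then x = x'. (In other words, a K-sparse initial state of the linear system x_{t+1} = A x_t with scalar observations y_t = C x_t is uniquely determined by the 2K+1 observations y_0, …, y_{2K}.) -/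
open Matrix

/-!
The difference of two `K`-sparse states is supported on a set of at most `2K` indices. Restricted
to this set, the equalities of the first `2K` observations form a homogeneous linear system in the
numbers `c_j (x_j - x'_j)`, whose matrix is a Vandermonde matrix with the distinct nodes `λ_j`.
Hence all these numbers vanish.
-/

section DiagonalObservation

variable {ι R : Type*}

theorem eq_zero_on_finset_of_sum_mul_pow_eq_zero [CommRing R] [IsDomain R] {s : Finset ι}
    {v w : ι → R} (hv : Set.InjOn v s)
    (hsum : ∀ t < s.card, ∑ j ∈ s, w j * v j ^ t = 0) :
    ∀ j ∈ s, w j = 0 := by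
  let e : Fin s.card ≃ s := s.equivFin.symm
  have nodes_injective : Function.Injective fun i => v (e i) :=
    hv.injective.comp e.injective
  have coeff_eq_zero : (fun i => w (e i)) = 0 := by
    refine eq_zero_of_forall_pow_sum_mul_pow_eq_zero nodes_injective fun t => ?_
    rw [e.sum_comp fun j : s => w j * v j ^ (t : ℕ),
      s.sum_coe_sort fun j => w j * v j ^ (t : ℕ)]
    exact hsum t t.isLt
  intro j hj
  simpa using congrFun coeff_eq_zero (e.symm ⟨j, hj⟩)

variable [Fintype ι] [DecidableEq ι]

theorem dotProduct_diagonal_pow_mulVec [CommSemiring R] (lam c x : ι → R) (t : ℕ) :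
    c ⬝ᵥ (diagonal lam ^ t *ᵥ x) = ∑ j, c j * x j * lam j ^ t := by
  simp only [diagonal_pow, dotProduct, mulVec_diagonal, Pi.pow_apply, mul_assoc, mul_comm (x _)]

variable [CommRing R] [IsDomain R] [DecidableEq R] {lam c x x' : ι → R}

theorem eq_of_observations_eq_of_lt_hammingDist (hlam : Function.Injective lam)
    (hc : ∀ j, c j ≠ 0)
    (hobs : ∀ t < hammingDist x x',
      c ⬝ᵥ (diagonal lam ^ t *ᵥ x) = c ⬝ᵥ (diagonal lam ^ t *ᵥ x')) :
    x = x' := by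
  have sum_diff_eq_zero : ∀ t < hammingDist x x',
      ∑ j with x j ≠ x' j, c j * (x j - x' j) * lam j ^ t = 0 := by
    intro t ht
    calc ∑ j with x j ≠ x' j, c j * (x j - x' j) * lam j ^ t
        = ∑ j, c j * (x - x') j * lam j ^ t :=
          Finset.sum_filter_of_ne fun j _ hj hx => hj (by simp [hx])
      _ = c ⬝ᵥ (diagonal lam ^ t *ᵥ x) - c ⬝ᵥ (diagonal lam ^ t *ᵥ x') := by
          rw [← dotProduct_diagonal_pow_mulVec, mulVec_sub, dotProduct_sub]
      _ = 0 := sub_eq_zero.mpr (hobs t ht)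
  funext j
  by_contra hj
  have term_eq_zero : c j * (x j - x' j) = 0 :=
    eq_zero_on_finset_of_sum_mul_pow_eq_zero hlam.injOn sum_diff_eq_zero j (by simpa using hj)
  exact mul_ne_zero (hc j) (sub_ne_zero.mpr hj) term_eq_zero

theorem sparse_initial_state_unique_diagonal_general {K : ℕ} (hlam : Function.Injective lam)
    (hc : ∀ j, c j ≠ 0) (hx : hammingNorm x ≤ K) (hx' : hammingNorm x' ≤ K)
    (hobs : ∀ t < 2 * K,
      c ⬝ᵥ (diagonal lam ^ t *ᵥ x) = c ⬝ᵥ (diagonal lam ^ t *ᵥ x')) :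
    x = x' := by
  have dist_le : hammingDist x x' ≤ 2 * K :=
    calc hammingDist x x'
        ≤ hammingDist x 0 + hammingDist 0 x' := hammingDist_triangle x 0 x'
      _ = hammingNorm x + hammingNorm x' := by rw [hammingDist_zero_right, hammingDist_zero_left]
      _ ≤ 2 * K := by lia
  exact eq_of_observations_eq_of_lt_hammingDist hlam hc fun t ht => hobs t (ht.trans_le dist_le)

end DiagonalObservation

/-- A `K`-sparse initial state of the linear system `x_{t+1} = A x_t`
with `A = diag(λ₁, …, λₙ)` (distinct nonzero diagonal entries) and scalar observations
`y_t = C x_t` (all entries of `C` nonzero) is uniquely determined by the `2K+1`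
observations `y_0, …, y_{2K}`, provided `2K+1 ≤ n`. -/
theorem sparse_initial_state_unique_diagonal
    {n K : ℕ} (hK : 2 * K + 1 ≤ n)
    (lam : Fin n → ℝ) (hdistinct : Function.Injective lam)
    (hnonzero : ∀ j, lam j ≠ 0)
    (C : Fin n → ℝ) (hC : ∀ j, C j ≠ 0)
    (x x' : Fin n → ℝ)
    (hx : (Finset.univ.filter (fun i => x i ≠ 0)).card ≤ K)
    (hx' : (Finset.univ.filter (fun i => x' i ≠ 0)).card ≤ K)
    (hobs : ∀ t : ℕ, t ≤ 2 * K →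
      C ⬝ᵥ ((Matrix.diagonal lam ^ t).mulVec x) =
      C ⬝ᵥ ((Matrix.diagonal lam ^ t).mulVec x')) :
    x = x' :=
  sparse_initial_state_unique_diagonal_general hdistinct hC hx hx' fun t ht => hobs t ht.le
end

section
/- Let λ_1, …, λ_n be distinct real numbers, let K ≥ 1, set m = 2K+1, and let S ⊆ {1, …, n} with |S| = K. Then there exists a vector g ∈ ℝ^m such that ∑_{t=1}^{m} g_t λ_i^{t-1} = 1 for every i ∈ S, and ∑_{t=1}^{m} g_t λ_i^{t-1} < 1 for every i ∉ S. -/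
/-!
The vector `g` is the coefficient vector of a polynomial of degree at most `2K`. With
`q = ∏ i ∈ S, (X - λ i)`, the polynomial `1 - q ^ 2` has degree at most `2K`, equals `1` exactly
at the roots of `q`, and is smaller than `1` everywhere else because nonzero squares are positive.
-/

open Polynomial Lagrange

section OneSubNodalSq

variable {ι R : Type*} [CommRing R]

/-- The dual certificate polynomial of the nodes `v i`, `i ∈ s`: it touches its maximum `1` at the
nodes. It is built on Mathlib's `Lagrange.nodal`, so repeated nodes are allowed. -/
noncomputable def oneSubNodalSq (s : Finset ι) (v : ι → R) : R[X] :=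
  1 - nodal s v ^ 2

theorem eval_oneSubNodalSq (s : Finset ι) (v : ι → R) (x : R) :
    (oneSubNodalSq s v).eval x = 1 - (nodal s v).eval x ^ 2 := by
  simp [oneSubNodalSq]

theorem eval_oneSubNodalSq_at_node {s : Finset ι} (v : ι → R) {i : ι} (hi : i ∈ s) :
    (oneSubNodalSq s v).eval (v i) = 1 := by
  simp [eval_oneSubNodalSq, eval_nodal_at_node hi]

theorem eval_oneSubNodalSq_lt_one_of_not_at_node [LinearOrder R] [IsStrictOrderedRing R]
    {s : Finset ι} {v : ι → R} {x : R} (hx : ∀ i ∈ s, x ≠ v i) :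
    (oneSubNodalSq s v).eval x < 1 := by
  rw [eval_oneSubNodalSq]
  exact sub_lt_self 1 (sq_pos_of_ne_zero (eval_nodal_not_at_node hx))

theorem degree_oneSubNodalSq_le (s : Finset ι) (v : ι → R) :
    (oneSubNodalSq s v).degree ≤ (2 * s.card : ℕ) := by
  nontriviality R
  have nodal_sq_le : (nodal s v ^ 2).degree ≤ (2 * s.card : ℕ) := by
    simpa [degree_nodal] using degree_pow_le (nodal s v) 2
  have one_le : (1 : R[X]).degree ≤ (2 * s.card : ℕ) :=
    degree_one_le.trans (by positivity)
  exact (degree_sub_le _ _).trans (max_le one_le nodal_sq_le)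

end OneSubNodalSq

theorem exists_dual_certificate_vandermonde_general {ι R : Type*} [CommRing R] [LinearOrder R]
    [IsStrictOrderedRing R] {m : ℕ} (v : ι → R) (s : Finset ι) (hm : 2 * s.card < m) :
    ∃ g : Fin m → R,
      (∀ i ∈ s, ∑ t, g t * v i ^ (t : ℕ) = 1) ∧
      (∀ x, (∀ i ∈ s, x ≠ v i) → ∑ t, g t * x ^ (t : ℕ) < 1) := by
  have hdegree : oneSubNodalSq s v ∈ degreeLT R m :=
    mem_degreeLT.mpr ((degree_oneSubNodalSq_le s v).trans_lt (by exact_mod_cast hm))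
  refine ⟨degreeLTEquiv R m ⟨_, hdegree⟩, fun i hi => ?_, fun x hx => ?_⟩
  · rw [← eval_eq_sum_degreeLTEquiv, eval_oneSubNodalSq_at_node v hi]
  · rw [← eval_eq_sum_degreeLTEquiv]
    exact eval_oneSubNodalSq_lt_one_of_not_at_node hx

/-- For distinct real numbers `λ₁, …, λₙ`, `K ≥ 1`, `m = 2K+1`, and a
`K`-element subset `S ⊆ {1, …, n}`, there exists `g ∈ ℝ^m` such that
`∑_{t=1}^{m} g_t λ_i^{t-1} = 1` for `i ∈ S` and `∑_{t=1}^{m} g_t λ_i^{t-1} < 1`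
for `i ∉ S`. -/
theorem exists_dual_certificate_vandermonde
    {n K : ℕ} (hK : 1 ≤ K)
    (lam : Fin n → ℝ) (hdistinct : Function.Injective lam)
    (S : Finset (Fin n)) (hS : S.card = K) :
    ∃ g : Fin (2 * K + 1) → ℝ,
      (∀ i ∈ S, ∑ t, g t * lam i ^ (t : ℕ) = 1) ∧
      (∀ i ∉ S, ∑ t, g t * lam i ^ (t : ℕ) < 1) := by
  obtain ⟨g, g_eq, g_lt⟩ := exists_dual_certificate_vandermonde_general (m := 2 * K + 1) lam S
    (by lia)
  exact ⟨g, g_eq, fun i hi => g_lt _ fun j hj => hdistinct.ne (ne_of_mem_of_not_mem hj hi).symm⟩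
end

section
/- Let λ_1, …, λ_n be distinct real numbers, let K ≥ 1 with 2K+1 ≤ n, set m = 2K+1, and let M ∈ ℝ^{m×n} be the Vandermonde-type matrix with entries M_{i,j} = λ_j^{i-1}. Let z₀ ∈ ℝ^n have all entries nonnegative and at most K nonzero entries. Then z₀ is the unique minimizer of the ℓ1 norm over the affine set of solutions: for every z ∈ ℝ^n with M z = M z₀ and z ≠ z₀, one has ‖z‖₁ > ‖z₀‖₁. -/
open Matrix

/-!
Let `S` be the support of `z₀`. A vector in the kernel of `M` is orthogonal to `i ↦ p (λ i)` for
every polynomial `p` of degree at most `2K`. Taking `p = 1`, the entries of `z` and of `z₀` have the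
same sum, so `‖z‖₁ ≤ ‖z₀‖₁` forces `z ≥ 0`. Then `w = z - z₀` is nonnegative off `S`, and
`p = ∏ j ∈ S, (X - λ j) ^ 2`, which is positive at the nodes off `S` and vanishes on `S`, shows that
`w` is supported in `S`. Finally `p = ∏ j ∈ S \ {i}, (X - λ j)` isolates the entry `w i`.
-/

open Polynomial Lagrange
open scoped Finset

section Moments

variable {ι R : Type*} [Fintype ι] {m : ℕ} {lam w : ι → R} {S : Finset ι}

theorem sum_eval_mul_eq_zero_of_sum_pow_mul_eq_zero [CommSemiring R]
    (hw : ∀ k < m, ∑ i, lam i ^ k * w i = 0) {p : R[X]} (hp : p.natDegree < m) :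
    ∑ i, p.eval (lam i) * w i = 0 :=
  calc
    ∑ i, p.eval (lam i) * w i
        = ∑ k ∈ Finset.range m, p.coeff k * ∑ i, lam i ^ k * w i := by
      simp_rw [eval_eq_sum_range' hp, Finset.sum_mul, Finset.mul_sum, mul_assoc]
      exact Finset.sum_comm
    _ = 0 := Finset.sum_eq_zero fun k hk => by rw [hw k (Finset.mem_range.mp hk), mul_zero]

theorem eq_zero_of_sum_pow_mul_eq_zero_of_support_subset [CommRing R] [IsDomain R]
    (hlam : Set.InjOn lam S) (hw : ∀ k < m, ∑ i, lam i ^ k * w i = 0)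
    (hS : Function.support w ⊆ S) (hcard : #S ≤ m) : w = 0 := by
  classical
  by_contra hne
  obtain ⟨i, hwi⟩ := Function.ne_iff.mp hne
  have hi : i ∈ S := hS hwi
  have hdeg : (nodal (S.erase i) lam).natDegree < m := by
    rw [natDegree_nodal]
    exact (Finset.card_erase_lt_of_mem hi).trans_le hcard
  have hother : ∀ k ≠ i, (nodal (S.erase i) lam).eval (lam k) * w k = 0 := by
    intro k hki
    by_cases hk : k ∈ S
    · rw [eval_nodal_at_node (Finset.mem_erase.mpr ⟨hki, hk⟩), zero_mul]
    · rw [Function.notMem_support.mp (mt (@hS k) hk), mul_zero]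
  have hnode : (nodal (S.erase i) lam).eval (lam i) ≠ 0 :=
    eval_nodal_not_at_node fun j hj h =>
      Finset.ne_of_mem_erase hj (hlam (Finset.mem_of_mem_erase hj) hi h.symm)
  have hsum := sum_eval_mul_eq_zero_of_sum_pow_mul_eq_zero hw hdeg
  rw [Fintype.sum_eq_single i hother] at hsum
  exact mul_ne_zero hnode hwi hsum

variable [CommRing R] [LinearOrder R] [IsStrictOrderedRing R]

theorem support_subset_of_sum_pow_mul_eq_zero_of_nonneg_off
    (hlam : Function.Injective lam) (hw : ∀ k < m, ∑ i, lam i ^ k * w i = 0)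
    (hnonneg : ∀ i ∉ S, 0 ≤ w i) (hcard : 2 * #S < m) : Function.support w ⊆ S := by
  have hdeg : (nodal S lam ^ 2).natDegree < m := by
    rwa [natDegree_pow, natDegree_nodal]
  have hterm : ∀ i, 0 ≤ (nodal S lam ^ 2).eval (lam i) * w i := by
    intro i
    rw [eval_pow]
    by_cases hi : i ∈ S
    · simp [eval_nodal_at_node hi]
    · exact mul_nonneg (sq_nonneg _) (hnonneg i hi)
  have hzero := (Fintype.sum_eq_zero_iff_of_nonneg hterm).mp
    (sum_eval_mul_eq_zero_of_sum_pow_mul_eq_zero hw hdeg)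
  intro i hwi
  by_contra hi
  have hnode : (nodal S lam).eval (lam i) ≠ 0 :=
    eval_nodal_not_at_node fun j hj h => hi (hlam h ▸ hj)
  refine mul_ne_zero ?_ hwi (congrFun hzero i)
  rw [eval_pow]
  exact pow_ne_zero 2 hnode

theorem eq_zero_of_sum_pow_mul_eq_zero_of_nonneg_off
    (hlam : Function.Injective lam) (hw : ∀ k < m, ∑ i, lam i ^ k * w i = 0)
    (hnonneg : ∀ i ∉ S, 0 ≤ w i) (hcard : 2 * #S < m) : w = 0 :=
  eq_zero_of_sum_pow_mul_eq_zero_of_support_subset hlam.injOn hw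
    (support_subset_of_sum_pow_mul_eq_zero_of_nonneg_off hlam hw hnonneg hcard) (by lia)

end Moments

theorem nonneg_of_sum_abs_le_sum {ι G : Type*} [AddCommGroup G] [LinearOrder G]
    [IsOrderedAddMonoid G] {s : Finset ι} {f : ι → G} (h : ∑ i ∈ s, |f i| ≤ ∑ i ∈ s, f i) :
    ∀ i ∈ s, 0 ≤ f i := by
  have hle : ∀ i ∈ s, f i ≤ |f i| := fun i _ => le_abs_self (f i)
  have heq := (Finset.sum_eq_sum_iff_of_le hle).mp ((Finset.sum_le_sum hle).antisymm h)
  exact fun i hi => abs_eq_self.mp (heq i hi).symm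

theorem nonneg_sparse_unique_l1_minimizer_vandermonde_general
    {ι R : Type*} [Fintype ι] [CommRing R] [LinearOrder R] [IsStrictOrderedRing R] {m : ℕ}
    {lam : ι → R} (hlam : Function.Injective lam)
    {M : Matrix (Fin m) ι R} (hM : ∀ i j, M i j = lam j ^ (i : ℕ))
    {z₀ : ι → R} (hnonneg : ∀ i, 0 ≤ z₀ i) (hsparse : 2 * #{i | z₀ i ≠ 0} < m)
    {z : ι → R} (hsol : M *ᵥ z = M *ᵥ z₀) (hne : z ≠ z₀) :
    ∑ i, |z₀ i| < ∑ i, |z i| := by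
  by_contra! hle
  have hmoments : ∀ k < m, ∑ i, lam i ^ k * (z - z₀) i = 0 := by
    intro k hk
    have hker : M *ᵥ (z - z₀) = 0 := by rw [mulVec_sub, hsol, sub_self]
    simpa only [mulVec, dotProduct, hM, Pi.zero_apply] using congrFun hker ⟨k, hk⟩
  have hsum : ∑ i, z i = ∑ i, z₀ i := by
    simpa [sub_eq_zero] using hmoments 0 (by lia)
  have hz : ∀ i, 0 ≤ z i := by
    simpa using nonneg_of_sum_abs_le_sum (s := Finset.univ) (f := z) <| calc
      ∑ i, |z i| ≤ ∑ i, |z₀ i| := hle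
      _ = ∑ i, z₀ i := Fintype.sum_congr _ _ fun i => abs_of_nonneg (hnonneg i)
      _ = ∑ i, z i := hsum.symm
  have hoff : ∀ i ∉ ({i | z₀ i ≠ 0} : Finset ι), 0 ≤ (z - z₀) i := by
    intro i hi
    have hi₀ : z₀ i = 0 := by simpa using hi
    simpa [hi₀] using hz i
  exact hne (sub_eq_zero.mp
    (eq_zero_of_sum_pow_mul_eq_zero_of_nonneg_off hlam hmoments hoff hsparse))

/-- For the `(2K+1) × n` Vandermonde-type matrix `M` built from distinct
real numbers `λ₁, …, λₙ` (with `2K+1 ≤ n`, `K ≥ 1`), a nonnegative vector `z₀` with at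
most `K` nonzero entries is the unique ℓ1-minimizer over the affine solution set:
any other solution `z` of `M z = M z₀` has strictly larger ℓ1 norm. -/
theorem nonneg_sparse_unique_l1_minimizer_vandermonde
    {n K : ℕ} (hK : 1 ≤ K) (hn : 2 * K + 1 ≤ n)
    (lam : Fin n → ℝ) (hdistinct : Function.Injective lam)
    (M : Matrix (Fin (2 * K + 1)) (Fin n) ℝ)
    (hM : ∀ i j, M i j = lam j ^ (i : ℕ))
    (z₀ : Fin n → ℝ) (hnonneg : ∀ i, 0 ≤ z₀ i)
    (hsparse : (Finset.univ.filter (fun i => z₀ i ≠ 0)).card ≤ K)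
    (z : Fin n → ℝ) (hsol : M.mulVec z = M.mulVec z₀) (hne : z ≠ z₀) :
    ∑ i, |z₀ i| < ∑ i, |z i| := by
  exact nonneg_sparse_unique_l1_minimizer_vandermonde_general hdistinct hM hnonneg (by lia)
    hsol hne
end

section
/- (Null-space condition, necessity.) Let Φ ∈ ℝ^{m×n} and K ≥ 1. Suppose that every K-sparse vector x ∈ ℝ^n is the unique minimizer of ‖·‖₁ over {x' ∈ ℝ^n : Φ x' = Φ x}. Then for every nonzero w ∈ ℝ^n with Φ w = 0 and every subset T ⊆ {1, …, n} with |T| = K, one has ∑_{i ∈ T} |w_i| < ∑_{j ∈ T^c} |w_j|, where T^c = {1, …, n} \ T. -/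
open Matrix

/-!
Split a kernel vector as `w = w_T + w_{Tᶜ}`. Since `Φ w = 0`, the vectors `w_T` and `-w_{Tᶜ}` have
the same measurement, and they differ because `w ≠ 0`. As `w_T` is sparse, it is the unique
ℓ1-minimizer for that measurement, so `‖w_T‖₁ < ‖w_{Tᶜ}‖₁`.
-/

section L1Recovery

variable {ι E F : Type*} [Fintype ι]

/-- `x` is the unique ℓ1-minimizer among all vectors with the same measurement `Φ x`. Entries lie in
an arbitrary seminormed group, whose norm replaces the absolute value. -/
def IsUniqueL1Minimizer [SeminormedAddCommGroup E] (Φ : (ι → E) → F) (x : ι → E) : Prop :=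
  ∀ x', Φ x' = Φ x → x' ≠ x → ∑ i, ‖x i‖ < ∑ i, ‖x' i‖

theorem card_filter_indicator_ne_zero_le [Zero E] [DecidableEq E] (T : Finset ι) (w : ι → E) :
    (Finset.univ.filter fun i => (T : Set ι).indicator w i ≠ 0).card ≤ T.card :=
  Finset.card_le_card fun _ hi =>
    Finset.mem_coe.mp (Set.mem_of_indicator_ne_zero (Finset.mem_filter.mp hi).2)

theorem sum_norm_indicator [SeminormedAddCommGroup E] (T : Finset ι) (w : ι → E) :
    ∑ i, ‖(T : Set ι).indicator w i‖ = ∑ i ∈ T, ‖w i‖ := by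
  simp only [norm_indicator_eq_indicator_norm]
  exact Finset.sum_indicator_subset (fun i => ‖w i‖) T.subset_univ

variable [SeminormedAddCommGroup E] [AddGroup F] [DecidableEq ι]

theorem IsUniqueL1Minimizer.sum_norm_lt_sum_norm_compl {Φ : (ι → E) →+ F} {T : Finset ι}
    {w : ι → E} (hmin : IsUniqueL1Minimizer Φ ((T : Set ι).indicator w)) (hw : w ≠ 0)
    (hker : Φ w = 0) : ∑ i ∈ T, ‖w i‖ < ∑ i ∈ Tᶜ, ‖w i‖ := by
  have competitor_eq : -((Tᶜ : Finset ι) : Set ι).indicator w = (T : Set ι).indicator w - w := by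
    rw [Finset.coe_compl, Set.indicator_compl, neg_sub]
  have same_measurement :
      Φ (-((Tᶜ : Finset ι) : Set ι).indicator w) = Φ ((T : Set ι).indicator w) := by
    rw [competitor_eq, map_sub, hker, sub_zero]
  have competitor_ne : -((Tᶜ : Finset ι) : Set ι).indicator w ≠ (T : Set ι).indicator w := by
    rwa [competitor_eq, Ne, sub_eq_self]
  calc ∑ i ∈ T, ‖w i‖ = ∑ i, ‖(T : Set ι).indicator w i‖ := (sum_norm_indicator T w).symm
    _ < ∑ i, ‖(-((Tᶜ : Finset ι) : Set ι).indicator w) i‖ :=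
      hmin _ same_measurement competitor_ne
    _ = ∑ i ∈ Tᶜ, ‖w i‖ := by simp only [Pi.neg_apply, norm_neg, sum_norm_indicator]

theorem null_space_condition_necessary_l1_recovery_general [DecidableEq E] {K : ℕ}
    (Φ : (ι → E) →+ F)
    (huniq : ∀ x : ι → E, (Finset.univ.filter fun i => x i ≠ 0).card ≤ K →
      IsUniqueL1Minimizer Φ x)
    (w : ι → E) (hw : w ≠ 0) (hker : Φ w = 0) (T : Finset ι) (hT : T.card ≤ K) :
    ∑ i ∈ T, ‖w i‖ < ∑ i ∈ Tᶜ, ‖w i‖ :=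
  (huniq _ ((card_filter_indicator_ne_zero_le T w).trans hT)).sum_norm_lt_sum_norm_compl hw hker

end L1Recovery

/-- Null-space condition, necessity: if every `K`-sparse `x` is the
unique ℓ1-minimizer over `{x' : Φ x' = Φ x}`, then every nonzero kernel vector `w`
of `Φ` satisfies `∑_{i ∈ T} |w_i| < ∑_{j ∈ Tᶜ} |w_j|` for every index set `T` of
size `K`. -/
theorem null_space_condition_necessary_l1_recovery
    {m n K : ℕ} (hK : 1 ≤ K)
    (Φ : Matrix (Fin m) (Fin n) ℝ)
    (huniq : ∀ x : Fin n → ℝ, (Finset.univ.filter (fun i => x i ≠ 0)).card ≤ K →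
      ∀ x' : Fin n → ℝ, Φ.mulVec x' = Φ.mulVec x → x' ≠ x →
        ∑ i, |x i| < ∑ i, |x' i|)
    (w : Fin n → ℝ) (hw0 : w ≠ 0) (hker : Φ.mulVec w = 0)
    (T : Finset (Fin n)) (hT : T.card = K) :
    ∑ i ∈ T, |w i| < ∑ j ∈ Tᶜ, |w j| :=
  null_space_condition_necessary_l1_recovery_general Φ.mulVecLin.toAddMonoidHom huniq w hw0
    hker T hT.le
end
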